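/- arXiv:2012.11435 — 4 statements merged into one kernel-verified Lean document; each statement's English description precedes it below -/
import Mathlib

section
/- Fix a nominal speed x1,0 > 0 and set C = (∂ṁ_f/∂x1)(x1,0, x2,0) + (∂ṁ_f/∂x2)(x1,0, x2,0)·ρ·Cd·Af·x1,0 where x2,0 = (1/2)·ρ·Cd·Af·x1,0² + μ·M·g. Then the point (x1,0, x2,0, −M·(∂ṁ_f/∂x2)(x1,0,x2,0), 0) is the UNIQUE point (x1, x2, λ1, λ2) ∈ ℝ⁴ with x1 = x1,0 at which all four right-hand sides of the PMP dynamics ẋ1 = (1/M)·(x2 − (1/2)·ρ·Cd·Af·x1² − μ·M·g), ẋ2 = −λ2/R, λ̇1 = −(∂ṁ_f/∂x1)(x1,x2) + C + (1/M)·ρ·Cd·Af·x1·λ1, λ̇2 = −(∂ṁ_f/∂x2)(x1,x2) − λ1/M vanish simultaneously. -/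
/-!
With the first coordinate fixed, the system is triangular: since `M` and `R` are nonzero, the
`x1`-equation forces `x2`, the `x2`-equation forces `λ2 = 0`, and the `λ2`-equation then forces
`λ1`. The remaining `λ1`-equation holds at this point exactly because of the value of `C`.
The partial derivatives enter only through their values at the nominal point, so the form of the
fuel-rate map plays no role.
-/

/-- Fuel-rate map `ṁ_f(x1, x2) = x1·x2·(β0 + (γ/2)·(x1·x2 − P0)²)`. -/
noncomputable def mdotf (β0 γ P0 : ℝ) (x1 x2 : ℝ) : ℝ :=
  x1 * x2 * (β0 + γ / 2 * (x1 * x2 - P0) ^ 2)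

/-- Partial derivative `∂ṁ_f/∂x1`. -/
noncomputable def dmdx1 (β0 γ P0 : ℝ) (x1 x2 : ℝ) : ℝ :=
  deriv (fun t => mdotf β0 γ P0 t x2) x1

/-- Partial derivative `∂ṁ_f/∂x2`. -/
noncomputable def dmdx2 (β0 γ P0 : ℝ) (x1 x2 : ℝ) : ℝ :=
  deriv (fun t => mdotf β0 γ P0 x1 t) x2

/-- With `C` chosen as in the paper for a nominal speed `x1,0 > 0`, the equilibrium
`(x1,0, x2,0, −M·∂ṁ_f/∂x2, 0)` is the unique point with first coordinate `x1,0`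
at which all four right-hand sides of the PMP dynamics vanish simultaneously. -/
theorem pmp_equilibrium_unique
    (M ρ Cd Af μ g β0 γ P0 R : ℝ)
    (hM : 0 < M) (hρ : 0 < ρ) (hCd : 0 < Cd) (hAf : 0 < Af) (hμ : 0 < μ)
    (hg : 0 < g) (hβ0 : 0 < β0) (hγ : 0 < γ) (hP0 : 0 < P0) (hR : 0 < R)
    (x10 : ℝ) (hx10 : 0 < x10)
    (x20 C : ℝ)
    (hx20 : x20 = (1 / 2) * ρ * Cd * Af * x10 ^ 2 + μ * M * g)
    (hC : C = dmdx1 β0 γ P0 x10 x20 + dmdx2 β0 γ P0 x10 x20 * ρ * Cd * Af * x10) :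
    ∀ x1 x2 l1 l2 : ℝ, x1 = x10 →
      (((1 / M) * (x2 - (1 / 2) * ρ * Cd * Af * x1 ^ 2 - μ * M * g) = 0 ∧
        -l2 / R = 0 ∧
        -dmdx1 β0 γ P0 x1 x2 + C + (1 / M) * ρ * Cd * Af * x1 * l1 = 0 ∧
        -dmdx2 β0 γ P0 x1 x2 - l1 / M = 0)
      ↔ (x2 = x20 ∧ l1 = -M * dmdx2 β0 γ P0 x10 x20 ∧ l2 = 0)) := by
  rintro x1 x2 l1 l2 rfl
  have hM' := hM.ne'
  have hR' := hR.ne'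
  constructor
  · rintro ⟨h1, h2, -, h4⟩
    -- The third equation is redundant: the other three already determine the point.
    have hx2 : x2 = x20 := by
      rcases mul_eq_zero.mp h1 with h | h
      · exact absurd h (one_div_ne_zero hM')
      · linarith
    subst hx2
    refine ⟨rfl, ?_, ?_⟩
    · field_simp at h4
      linarith
    · rcases div_eq_zero_iff.mp h2 with h | h
      · linarith
      · exact absurd h hR'
  · rintro ⟨rfl, rfl, rfl⟩
    refine ⟨?_, by simp, ?_, ?_⟩
    · rw [hx20]
      ring
    -- The choice of `C` makes the costate equation hold once `λ1 = −M·∂ṁ_f/∂x2`.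
    · rw [hC]
      field_simp
      ring
    · field_simp
      ring
end

section
/- Let f, g, h, p, q, w, ℓ be real numbers and let A be the 4×4 real matrix with rows [−f, g, 0, 0], [0, 0, 0, −h], [−p + ℓ, −q, f, 0], [−q, −w, −g, 0]. Then the characteristic polynomial of A contains only even powers: there exist real numbers b and c such that charpoly(A) = X⁴ + b·X² + c. -/
open Polynomial

/-- The characteristic polynomial of the structural Jacobian of the linearized
Pontryagin state/co-state dynamics contains only even powers:
`charpoly(A) = X⁴ + b·X² + c` for some real `b`, `c`. -/
theorem charpoly_even_powers
    (f g h p q w ℓ : ℝ)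
    (A : Matrix (Fin 4) (Fin 4) ℝ)
    (hA : A =
      !![-f, g, 0, 0;
         0, 0, 0, -h;
         -p + ℓ, -q, f, 0;
         -q, -w, -g, 0]) :
    ∃ b c : ℝ, A.charpoly = X ^ 4 + C b * X ^ 2 + C c := by
  -- Read off `b` and `c` from `det (X - A)`, a combination of two 3×3 minors; the odd powers
  -- cancel because `(X + f) * (X - f)` is even and the two terms `± g * q * X` are opposite.
  refine ⟨-f ^ 2 - h * w, h * (2 * f * g * q + w * f ^ 2 + g ^ 2 * (p - ℓ)), ?_⟩
  subst hA
  rw [Matrix.charpoly, Matrix.det_succ_row_zero]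
  simp [Matrix.charmatrix_apply, Fin.sum_univ_succ, Matrix.det_fin_three, Fin.succAbove,
    Matrix.submatrix_apply]
  rw [show (C 2 : ℝ[X]) = 2 from map_ofNat C 2]
  ring
end

section
/- Let f, g, h, p, q, w, ℓ be real numbers and let A be the 4×4 real matrix with rows [−f, g, 0, 0], [0, 0, 0, −h], [−p + ℓ, −q, f, 0], [−q, −w, −g, 0]. If s ∈ ℂ is an eigenvalue of A (viewed as a complex matrix), then −s is also an eigenvalue of A. In particular, the spectrum of the linearized PMP dynamics is symmetric about the origin. -/
open Polynomial

/-- For the structural Jacobian `A` of the linearized PMP dynamics, viewed as a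
complex matrix, the spectrum is symmetric about the origin: if `s` is an
eigenvalue (a root of the characteristic polynomial over `ℂ`), so is `−s`. -/
theorem spectrum_symmetric
    (f g h p q w ℓ : ℝ)
    (A : Matrix (Fin 4) (Fin 4) ℂ)
    (hA : A =
      !![(-f : ℂ), (g : ℂ), 0, 0;
         0, 0, 0, (-h : ℂ);
         ((-p + ℓ : ℝ) : ℂ), (-q : ℂ), (f : ℂ), 0;
         (-q : ℂ), (-w : ℂ), (-g : ℂ), 0]) :
    ∀ s : ℂ, A.charpoly.IsRoot s → A.charpoly.IsRoot (-s) := by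
  intro s hs
  -- `A` is Hamiltonian: its blocks are `F`, `G`, `Q`, `-Fᵀ` with `G` and `Q` symmetric. Hence its
  -- characteristic polynomial is even, which in size four is read off by expanding determinants.
  have even_charpoly : A.charpoly.eval (-s) = A.charpoly.eval s := by
    rw [Matrix.eval_charpoly, Matrix.eval_charpoly, hA]
    simp [Matrix.det_succ_row_zero, Fin.sum_univ_succ, Fin.succAbove, Matrix.scalar_apply]
    ring
  rw [Polynomial.IsRoot.def] at hs ⊢
  rw [even_charpoly, hs]
end

section
/- Let B ≥ 0, κ > 0, and D > 0 be real numbers, and for R > 0 define b(R) = B + κ/R and c(R) = D/R. Then there exists a critical value R_crit > 0 such that for every R with 0 < R < R_crit, every complex root s of the polynomial s⁴ + b(R)·s² + c(R) satisfies Re(s) = 0. (Interpretation: for each nominal speed, there is a critical penalty on jerk below which all eigenvalues of the linearized PMP dynamics are purely imaginary, so pulse-and-glide driving is locally optimal.) -/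
/-!
The characteristic polynomial is a quadratic `z² + b z + c` in `z = s²`, with `b = B + κ/R > 0` and
`c = D/R > 0`. For `R < κ²/(4D)` we have `b² ≥ κ²/R² > 4D/R = 4c`, so both roots `z` are real, and
they are nonpositive because `√(b² - 4c) ≤ b`. A complex number whose square is a
nonpositive real has zero real part.
-/

theorem re_eq_zero_of_sq_eq_ofReal_nonpos {s : ℂ} {x : ℝ} (hx : x ≤ 0) (h : s ^ 2 = (x : ℂ)) :
    s.re = 0 := by
  have hre := congrArg Complex.re h
  have him := congrArg Complex.im h
  simp only [pow_two, Complex.mul_re, Complex.mul_im, Complex.ofReal_re, Complex.ofReal_im]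
    at hre him
  have hmul : s.re * s.im = 0 := by linarith
  rcases mul_eq_zero.mp hmul with h0 | h0
  · exact h0
  · rw [h0] at hre
    nlinarith [mul_self_nonneg s.re]

theorem re_eq_zero_of_biquadratic {b c : ℝ} (hb : 0 ≤ b) (hc : 0 ≤ c) (hdisc : 4 * c ≤ b ^ 2)
    {s : ℂ} (hs : s ^ 4 + (b : ℂ) * s ^ 2 + (c : ℂ) = 0) : s.re = 0 := by
  have hd : √(b ^ 2 - 4 * c) ^ 2 = b ^ 2 - 4 * c := Real.sq_sqrt (by linarith)
  have hdb : √(b ^ 2 - 4 * c) ≤ b := Real.sqrt_le_iff.mpr ⟨hb, by linarith⟩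
  have hd0 : 0 ≤ √(b ^ 2 - 4 * c) := Real.sqrt_nonneg _
  generalize √(b ^ 2 - 4 * c) = d at hd hdb hd0
  have hdC : (d : ℂ) ^ 2 = (b : ℂ) ^ 2 - 4 * (c : ℂ) := by exact_mod_cast hd
  have hfac : (2 * s ^ 2 + b - d) * (2 * s ^ 2 + b + d) = 0 := by
    linear_combination 4 * hs - hdC
  rcases mul_eq_zero.mp hfac with h | h
  · refine re_eq_zero_of_sq_eq_ofReal_nonpos (x := (d - b) / 2) (by linarith) ?_
    push_cast
    linear_combination h / 2
  · refine re_eq_zero_of_sq_eq_ofReal_nonpos (x := (-d - b) / 2) (by linarith) ?_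
    push_cast
    linear_combination h / 2

/-- For each nominal speed there is a critical penalty on jerk `R_crit > 0` below
which every complex root of the characteristic polynomial
`s⁴ + (B + κ/R)·s² + D/R` is purely imaginary, so all eigenvalues of the linearized
PMP dynamics lie on the imaginary axis and pulse-and-glide driving is locally optimal. -/
theorem critical_jerk_penalty_exists
    (B κ D : ℝ) (hB : 0 ≤ B) (hκ : 0 < κ) (hD : 0 < D) :
    ∃ Rcrit : ℝ, 0 < Rcrit ∧
      ∀ R : ℝ, 0 < R → R < Rcrit →
        ∀ s : ℂ, s ^ 4 + ((B + κ / R : ℝ) : ℂ) * s ^ 2 + ((D / R : ℝ) : ℂ) = 0 →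
          s.re = 0 := by
  refine ⟨κ ^ 2 / (4 * D), by positivity, fun R hR hlt s hs => ?_⟩
  have hκR : 0 < κ / R := by positivity
  refine re_eq_zero_of_biquadratic (by positivity) (by positivity) ?_ hs
  have hRD : R * (4 * D) < κ ^ 2 := (lt_div_iff₀ (by positivity)).mp hlt
  have hkey : 4 * (D / R) ≤ (κ / R) ^ 2 := by
    rw [div_pow, ← mul_div_assoc, div_le_div_iff₀ hR (by positivity)]
    nlinarith
  nlinarith [mul_nonneg hB hκR.le, sq_nonneg B]
end
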